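/- Let G be a finite abelian group and G₀ ≤ G. Write S = O_K[G], R = O_K[G₀] for a number field K. Under the identification S ⊗_R S ≅ O_K[G^{(2)}] with G^{(2)} = (G×G)/{(z,z⁻¹): z ∈ G₀}, and assuming K totally real and |G| odd, the induction map Pic(O_K[G₀])⁻ → Pic(O_K[G])⁻ on odd minus parts (with respect to the inversion involution j) is injective. -/

import Mathlib

open NumberField

set_option synthInstance.maxHeartbeats 800000
set_option maxHeartbeats 1600000

/-- A number field is totally real if every complex embedding has real image. -/
def IsTotallyRealNF (K : Type*) [Field K] [NumberField K] : Prop :=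
  ∀ φ : K →+* ℂ, ∀ x : K, (φ x).im = 0

/-- The twist of a module by a ring endomorphism of the base. -/
def Twist {R : Type*} [CommRing R] (j : R →+* R) (X : Type*) [AddCommGroup X]
    [Module R X] : Type _ := X

instance {R : Type*} [CommRing R] (j : R →+* R) (X : Type*) [AddCommGroup X]
    [Module R X] : AddCommGroup (Twist j X) := inferInstanceAs (AddCommGroup X)

noncomputable instance {R : Type*} [CommRing R] (j : R →+* R) (X : Type*)
    [AddCommGroup X] [Module R X] : Module R (Twist j X) := Module.compHom X j


section Helpers

open CommRing Submodule

lemma exists_cocycle {R S T : Type*} [CommRing R] [CommRing S] [CommRing T] [Algebra R S]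
    (α β : S →+* T) (p : T →+* S) (hα : ∀ s, p (α s) = s) (hβ : ∀ s, p (β s) = s)
    (hR : ∀ r : R, β (algebraMap R S r) = α (algebraMap R S r)) (I : (Submodule R S)ˣ) :
    ∃ u v : T, u * v = 1 ∧ p u = 1 ∧ (∀ s ∈ (I : Submodule R S), u * β s = α s) ∧
      (∀ t ∈ ((I⁻¹ : (Submodule R S)ˣ) : Submodule R S), v * β t = α t) := by
  have hII : ∀ a ∈ (I : Submodule R S), ∀ b ∈ ((I⁻¹ : (Submodule R S)ˣ) : Submodule R S),
      β (a * b) = α (a * b) := by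
    intro a ha b hb
    have h := Submodule.mul_mem_mul ha hb
    rw [I.mul_inv, Submodule.mem_one] at h
    obtain ⟨r, hr⟩ := h
    rw [← hr, hR]
  have h1 : (1 : S) ∈ (I : Submodule R S) * ((I⁻¹ : (Submodule R S)ˣ) : Submodule R S) := by
    rw [I.mul_inv]; exact Submodule.one_le.mp le_rfl
  have key : ∃ u v : T, p u = 1 ∧ (∀ s ∈ (I : Submodule R S), u * β s = α 1 * α s) ∧
      (∀ t ∈ ((I⁻¹ : (Submodule R S)ˣ) : Submodule R S), v * β t = α 1 * α t) := by
    refine Submodule.mul_induction_on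
      (C := fun r => ∃ u v : T, p u = r ∧ (∀ s ∈ (I : Submodule R S), u * β s = α r * α s) ∧
      (∀ t ∈ ((I⁻¹ : (Submodule R S)ˣ) : Submodule R S), v * β t = α r * α t)) h1 ?_ ?_
    · intro a ha b hb
      refine ⟨α a * β b, β a * α b, by simp [hα, hβ], ?_, ?_⟩
      · intro s hs
        have := hII s hs b hb
        simp only [map_mul] at this ⊢
        linear_combination (α a) * this
      · intro t ht
        have := hII a ha t ht
        simp only [map_mul] at this ⊢
        linear_combination (α b) * this
    · rintro x y ⟨u, v, hu, hu1, hv1⟩ ⟨u', v', hu', hu1', hv1'⟩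
      refine ⟨u + u', v + v', by simp [hu, hu'], ?_, ?_⟩
      · intro s hs
        rw [map_add, add_mul, add_mul, hu1 s hs, hu1' s hs]
      · intro s hs
        rw [map_add, add_mul, add_mul, hv1 s hs, hv1' s hs]
  obtain ⟨u, v, hu, hu1, hv1⟩ := key
  simp only [map_one, one_mul] at hu1 hv1
  refine ⟨u, v, ?_, hu, hu1, hv1⟩
  have : u * v * β 1 = α 1 := by
    refine Submodule.mul_induction_on (C := fun r => u * v * β r = α r) h1 ?_ ?_
    · intro a ha b hb
      rw [map_mul, map_mul, ← hu1 a ha, ← hv1 b hb]; ring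
    · intro x y hx hy
      rw [map_add, map_add, mul_add, hx, hy]
  simpa using this

/-- The conjugate of a submodule by a ring involution. -/
def conjSub {R S : Type*} [CommRing R] [CommRing S] [Algebra R S] (jR : R →+* R) (jS : S →+* S)
    (hj : ∀ r, jS (algebraMap R S r) = algebraMap R S (jR r)) (I : Submodule R S) :
    Submodule R S where
  carrier := {s | jS s ∈ I}
  add_mem' := by
    intro a b ha hb
    simp only [Set.mem_setOf_eq, map_add] at *
    exact I.add_mem ha hb
  zero_mem' := by simp
  smul_mem' := by
    intro r s hs
    simp only [Set.mem_setOf_eq] at *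
    rw [Algebra.smul_def, map_mul, hj, ← Algebra.smul_def]
    exact I.smul_mem _ hs

lemma conjSub_mul_one {R S : Type*} [CommRing R] [CommRing S] [Algebra R S]
    (jR : R →+* R) (jS : S →+* S)
    (hj : ∀ r, jS (algebraMap R S r) = algebraMap R S (jR r)) (hjj : ∀ s, jS (jS s) = s)
    (I J : Submodule R S) (h : I * J = 1) :
    conjSub jR jS hj I * conjSub jR jS hj J = 1 := by
  have hmem : ∀ (I : Submodule R S) s, s ∈ conjSub jR jS hj I ↔ jS s ∈ I := fun _ _ => Iff.rfl
  apply le_antisymm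
  · rw [Submodule.mul_le]
    intro a ha b hb
    have := Submodule.mul_mem_mul ((hmem I a).1 ha) ((hmem J b).1 hb)
    rw [h, Submodule.mem_one] at this
    obtain ⟨r, hr⟩ := this
    rw [Submodule.mem_one]
    refine ⟨jR r, ?_⟩
    rw [← hj, hr, map_mul, hjj, hjj]
  · rw [Submodule.one_le]
    have h1 : (1 : S) ∈ I * J := by rw [h]; exact Submodule.one_le.mp le_rfl
    have : jS 1 ∈ conjSub jR jS hj I * conjSub jR jS hj J := by
      refine Submodule.mul_induction_on
        (C := fun r => jS r ∈ conjSub jR jS hj I * conjSub jR jS hj J) h1 ?_ ?_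
      · intro a ha b hb
        rw [map_mul]
        refine Submodule.mul_mem_mul ?_ ?_
        · rw [hmem, hjj]; exact ha
        · rw [hmem, hjj]; exact hb
      · intro x y hx hy
        rw [map_add]; exact Submodule.add_mem _ hx hy
    simpa using this

lemma core_sq {R S T : Type*} [CommRing R] [CommRing S] [CommRing T] [Algebra R S]
    [FaithfulSMul R S]
    (α β : S →+* T) (p : T →+* S) (hα : ∀ s, p (α s) = s) (hβ : ∀ s, p (β s) = s)
    (hR : ∀ r : R, β (algebraMap R S r) = α (algebraMap R S r))
    (hdesc : ∀ s : S, β s = α s → ∃ r : R, algebraMap R S r = s)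
    (jR : R →+* R) (jS : S →+* S) (jT : T →+* T)
    (hj : ∀ r, jS (algebraMap R S r) = algebraMap R S (jR r)) (hjj : ∀ s, jS (jS s) = s)
    (hjT : ∀ t, jT (jT t) = t) (hjα : ∀ s, jT (α s) = α (jS s)) (hjβ : ∀ s, jT (β s) = β (jS s))
    (hjp : ∀ t, p (jT t) = jS (p t))
    (hunit : ∀ w : T, w * jT w = 1 → p w = 1 → ∃ a : Sˣ, w * α a = β a)
    (X : Type*) [AddCommGroup X] [Module R X] [Module.Invertible R X]
    (hminus : Nonempty (TensorProduct R (Twist jR X) X ≃ₗ[R] R))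
    (hind : Nonempty (TensorProduct R S X ≃ₗ[S] S)) :
    Pic.mk R X ^ 2 = 1 := by
  haveI : Module.Invertible R (Twist jR X) := Module.Invertible.left hminus.some
  have hm : Pic.mk R (Twist jR X) * Pic.mk R X = 1 := by
    rw [← Pic.mk_tensor]; exact Pic.mk_eq_one_iff.mpr hminus
  have hx : Pic.mk R X ∈ (unitsToPic R S).range := by
    rw [Submodule.range_unitsToPic]
    refine Pic.mk_eq_one_iff.mpr ⟨?_⟩
    exact TensorProduct.AlgebraTensorModule.congr (.refl S S) (Pic.mk.linearEquiv R X) ≪≫ₗ hind.some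
  obtain ⟨I, hI⟩ := hx
  have hI' : Nonempty (X ≃ₗ[R] I) := by
    rw [unitsToPic_apply] at hI
    exact Pic.mk_eq_mk_iff.mp hI.symm
  obtain ⟨e⟩ := hI'
  obtain ⟨I', hmem, hmem'⟩ : ∃ I' : (Submodule R S)ˣ,
      (∀ s, s ∈ (I' : Submodule R S) ↔ jS s ∈ (I : Submodule R S)) ∧
      (∀ s, s ∈ ((I'⁻¹ : (Submodule R S)ˣ) : Submodule R S) ↔
        jS s ∈ ((I⁻¹ : (Submodule R S)ˣ) : Submodule R S)) :=
    ⟨{ val := conjSub jR jS hj I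
       inv := conjSub jR jS hj (I⁻¹ : (Submodule R S)ˣ)
       val_inv := conjSub_mul_one jR jS hj hjj _ _ I.mul_inv
       inv_val := conjSub_mul_one jR jS hj hjj _ _ I.inv_mul },
      fun _ => Iff.rfl, fun _ => Iff.rfl⟩
  have hI' : Pic.mk R (Twist jR X) = unitsToPic R S I' := by
    rw [unitsToPic_apply, Pic.mk_eq_mk_iff]
    let f : Twist jR X →ₗ[R] I' :=
      { toFun := fun x => ⟨jS (e (show X from x)), by rw [hmem, hjj]; exact (e _).2⟩
        map_add' := by
          intro x y
          apply Subtype.ext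
          change jS (e ((show X from x) + (show X from y)) : S) = jS _ + jS _
          rw [map_add e, Submodule.coe_add, map_add]
        map_smul' := by
          intro r x
          apply Subtype.ext
          change jS (e (jR r • (show X from x)) : S) = r • jS _
          rw [map_smul e, Submodule.coe_smul, Algebra.smul_def, map_mul, ← hj, hjj,
            ← Algebra.smul_def] }
    refine ⟨LinearEquiv.ofBijective f ⟨?_, ?_⟩⟩
    · intro x y h
      have h2 : jS (e (show X from x)) = jS (e (show X from y)) := congrArg Subtype.val h
      have h3 := congrArg jS h2
      rw [hjj, hjj] at h3
      exact e.injective (Subtype.ext h3)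
    · intro y
      refine ⟨(e.symm ⟨jS y, (hmem _).1 y.2⟩ : X), ?_⟩
      apply Subtype.ext
      change jS (e (e.symm ⟨jS y, (hmem _).1 y.2⟩) : S) = y
      rw [e.apply_symm_apply]
      exact hjj _
  have hsq : Pic.mk R X ^ 2 = unitsToPic R S (I * I'⁻¹) := by
    rw [map_mul, map_inv, ← hI', hI, sq, eq_inv_of_mul_eq_one_left hm, inv_inv]
  rw [hsq]
  obtain ⟨u, v, huv, hpu, hu, hv⟩ := exists_cocycle α β p hα hβ hR I
  have hju : ∀ s ∈ (I' : Submodule R S), jT u * β s = α s := by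
    intro s hs
    have := congrArg jT (hu _ ((hmem s).1 hs))
    rwa [map_mul, hjβ, hjα, hjj] at this
  have hjv : ∀ s ∈ ((I'⁻¹ : (Submodule R S)ˣ) : Submodule R S), jT v * β s = α s := by
    intro s hs
    have := congrArg jT (hv _ ((hmem' s).1 hs))
    rwa [map_mul, hjβ, hjα, hjj] at this
  have hjuv : jT u * jT v = 1 := by rw [← map_mul, huv, map_one]
  have hpv : p v = 1 := by
    have := congrArg p huv
    rwa [map_mul, hpu, one_mul, map_one] at this
  obtain ⟨a, ha⟩ := hunit (u * jT v)
    (by rw [map_mul, hjT]; linear_combination (jT u * jT v) * huv + hjuv)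
    (by rw [map_mul, hjp, hpu, hpv, map_one, one_mul])
  have hw : ∀ s ∈ ((I * I'⁻¹ : (Submodule R S)ˣ) : Submodule R S), (u * jT v) * β s = α s := by
    intro s hs
    rw [Units.val_mul] at hs
    refine Submodule.mul_induction_on (C := fun s => (u * jT v) * β s = α s) hs ?_ ?_
    · intro x hx y hy
      rw [map_mul, map_mul, ← hu x hx, ← hjv y hy]; ring
    · intro x y hx hy
      rw [map_add, map_add, mul_add, hx, hy]
  have hw' : ∀ s ∈ (((I * I'⁻¹)⁻¹ : (Submodule R S)ˣ) : Submodule R S),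
      (v * jT u) * β s = α s := by
    intro s hs
    rw [mul_inv, inv_inv, Units.val_mul] at hs
    refine Submodule.mul_induction_on (C := fun s => (v * jT u) * β s = α s) hs ?_ ?_
    · intro x hx y hy
      rw [map_mul, map_mul, ← hv x hx, ← hju y hy]; ring
    · intro x y hx hy
      rw [map_add, map_add, mul_add, hx, hy]
  have hαa : α a * α (a⁻¹ : Sˣ) = 1 := by rw [← map_mul, Units.mul_inv, map_one]
  have hβa : β a * β (a⁻¹ : Sˣ) = 1 := by rw [← map_mul, Units.mul_inv, map_one]
  generalize I * I'⁻¹ = J at hw hw'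
  let A : (Submodule R S)ˣ := Units.map (spanSingleton R).toMonoidHom a
  have hA : (A : Submodule R S) = span R {(a : S)} := rfl
  have hA' : ((A⁻¹ : (Submodule R S)ˣ) : Submodule R S) = span R {((a⁻¹ : Sˣ) : S)} := by
    change ((Units.map (spanSingleton R).toMonoidHom a)⁻¹ : (Submodule R S)ˣ).val = _
    rw [← map_inv]; rfl
  have h1 : ((J * A : (Submodule R S)ˣ) : Submodule R S) ≤ 1 := by
    rw [Units.val_mul, hA]
    intro z hz
    obtain ⟨x, hx, rfl⟩ := Submodule.mem_mul_span_singleton.mp hz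
    rw [Submodule.mem_one]
    refine hdesc _ ?_
    rw [map_mul, map_mul, ← ha, ← hw x hx]; ring
  have h2 : (((J * A)⁻¹ : (Submodule R S)ˣ) : Submodule R S) ≤ 1 := by
    rw [mul_inv, Units.val_mul, hA']
    intro z hz
    obtain ⟨x, hx, rfl⟩ := Submodule.mem_mul_span_singleton.mp hz
    rw [Submodule.mem_one]
    refine hdesc _ ?_
    rw [map_mul, map_mul, ← hw' x hx]
    have h3 : α (a⁻¹ : Sˣ) = β (a⁻¹ : Sˣ) * (u * jT v) := by
      linear_combination (-(β (a⁻¹ : Sˣ) * α (a⁻¹ : Sˣ))) * ha - (α (a⁻¹ : Sˣ)) * hβa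
        + (β (a⁻¹ : Sˣ) * (u * jT v)) * hαa
    rw [h3]
    linear_combination (- β x * β (a⁻¹ : Sˣ)) * (jT u * jT v * huv + hjuv)
  have h3 : J * A = 1 := by
    apply Units.ext
    apply le_antisymm h1
    calc ((1 : (Submodule R S)ˣ) : Submodule R S)
        = ((J * A : (Submodule R S)ˣ) : Submodule R S) *
          (((J * A)⁻¹ : (Submodule R S)ˣ) : Submodule R S) := by rw [Units.mul_inv, Units.val_one]
      _ ≤ ((J * A : (Submodule R S)ˣ) : Submodule R S) * 1 := mul_le_mul_right h2 _
      _ = _ := mul_one _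
  have h4 : J = Units.map (spanSingleton R).toMonoidHom a⁻¹ := by
    rw [map_inv]; exact eq_inv_of_mul_eq_one_left h3
  rw [← MonoidHom.mem_ker, ker_unitsToPic, h4]
  exact ⟨_, rfl⟩

lemma tensorPower_pic {R : Type*} [CommRing R] (X : Type*) [AddCommGroup X] [Module R X]
    [Module.Invertible R X] (n : ℕ) :
    Nonempty ((PiTensorProduct R (fun _ : Fin n => X)) ≃ₗ[R] (Pic.mk R X ^ n : Pic R)) := by
  induction n with
  | zero =>
    rw [pow_zero]
    have h : Nonempty (R ≃ₗ[R] (1 : Pic R)) := Pic.mk_eq_iff.mp Pic.mk_self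
    exact ⟨PiTensorProduct.isEmptyEquiv (Fin 0) ≪≫ₗ h.some⟩
  | succ n ih =>
    obtain ⟨e⟩ := ih
    have h : Nonempty (TensorProduct R (Pic.mk R X ^ n : Pic R) X ≃ₗ[R]
        (Pic.mk R X ^ (n + 1) : Pic R)) := by
      rw [← Pic.mk_eq_iff, Pic.mk_tensor, Pic.mk_eq_self, pow_succ]
    exact ⟨(TensorPower.mulEquiv (R := R) (M := X) (n := n) (m := 1)).symm ≪≫ₗ
      TensorProduct.congr e (PiTensorProduct.subsingletonEquiv (R := R) (s := fun _ : Fin 1 => X) 0)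
        ≪≫ₗ h.some⟩

lemma sum_sq_eq_one {K : Type*} [Field K] [NumberField K] (hK : IsTotallyRealNF K)
    {H : Type*} [Fintype H] (x : H → 𝓞 K) (hx : ∑ h, x h * x h = 1) :
    ∃ h, ∀ k, k ≠ h → x k = 0 := by
  classical
  have hne : ∃ h, x h ≠ 0 := by
    by_contra! hc
    simp [hc] at hx
  obtain ⟨h, hh⟩ := hne
  refine ⟨h, fun k hk => ?_⟩
  by_contra hk0
  have hlt : ∀ z : InfinitePlace K, z (x h) < 1 := by
    intro z
    have hreal : ∀ y : 𝓞 K, z.embedding ((y * y : 𝓞 K) : K) = ((z y ^ 2 : ℝ) : ℂ) := by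
      intro y
      have him := hK z.embedding y
      have hre : z.embedding (y : K) = (((z.embedding (y : K)).re : ℝ) : ℂ) := by
        apply Complex.ext <;> simp [him]
      rw [← InfinitePlace.norm_embedding_eq]
      push_cast
      rw [map_mul]
      rw [hre]
      rw [Complex.norm_real]
      norm_cast
      rw [Real.norm_eq_abs, sq_abs, sq]
    have hsum : ∑ i, (z (x i)) ^ 2 = 1 := by
      have := congrArg (fun y : 𝓞 K => z.embedding (y : K)) hx
      simp only [map_sum] at this
      rw [Finset.sum_congr rfl (fun i _ => hreal (x i))] at this
      simp only [map_one] at this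
      exact_mod_cast this
    have hle : z (x h) ^ 2 + z (x k) ^ 2 ≤ 1 := by
      rw [← hsum, ← Finset.sum_pair (f := fun i => z (x i) ^ 2) (Ne.symm hk)]
      exact Finset.sum_le_sum_of_subset_of_nonneg (Finset.subset_univ _)
        (fun i _ _ => sq_nonneg _)
    have hpos : 0 < z (x k) := by
      rw [InfinitePlace.pos_iff]
      exact_mod_cast hk0
    nlinarith [apply_nonneg z (x h : K)]
  obtain ⟨z⟩ : Nonempty (InfinitePlace K) := inferInstance
  exact absurd (InfinitePlace.one_le_of_lt_one (w := z) hh (fun z _ => hlt z)) (not_le.mpr (hlt z))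

lemma lenstra {K : Type*} [Field K] [NumberField K] (hK : IsTotallyRealNF K)
    {H : Type*} [CommGroup H] [Fintype H] (w : MonoidAlgebra (𝓞 K) H)
    (hw : w * MonoidAlgebra.mapDomainRingHom (𝓞 K) (invMonoidHom : H →* H) w = 1) :
    ∃ h c, w = MonoidAlgebra.single h c := by
  classical
  have hinv : ∀ a, (MonoidAlgebra.mapDomainRingHom (𝓞 K) (invMonoidHom : H →* H) w).coeff a⁻¹
      = w.coeff a := by
    intro a
    exact Finsupp.mapDomain_apply (f := fun h : H => h⁻¹) inv_injective w.coeff a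
  have h1 := congrArg (fun y => y.coeff 1) hw
  simp only [MonoidAlgebra.coeff_mul_apply_left, MonoidAlgebra.coeff_one_one, mul_one, hinv] at h1
  rw [Finsupp.sum_fintype _ _ (by simp)] at h1
  obtain ⟨h, hh⟩ := sum_sq_eq_one hK _ h1
  refine ⟨h, w.coeff h, ?_⟩
  ext k
  by_cases hk : k = h
  · subst hk; simp
  · simp [hh k hk, Ne.symm hk]

end Helpers

/-- let G be a finite abelian group of odd order, G₀ ≤ G, K a totally
real number field, R = O_K[G₀] and S = O_K[G].  Then induction on the odd minus parts
Pic(R)⁻ → Pic(S)⁻ is injective: if X is an invertible R-module whose class has odd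
order and lies in the minus part for the inversion involution j, and S ⊗_R X is free,
then X is free. -/
theorem stmt_16 (K : Type*) [Field K] [NumberField K] (hK : IsTotallyRealNF K)
    (G : Type*) [CommGroup G] [Fintype G] (hodd : Odd (Fintype.card G))
    (G₀ : Subgroup G)
    (X : Type*) [AddCommGroup X] [Module (MonoidAlgebra (𝓞 K) ↥G₀) X]
    (hproj : Module.Projective (MonoidAlgebra (𝓞 K) ↥G₀) X)
    (hfin : Module.Finite (MonoidAlgebra (𝓞 K) ↥G₀) X)
    -- X is invertible (represents a class in Pic(R))
    (Y : Type*) [AddCommGroup Y] [Module (MonoidAlgebra (𝓞 K) ↥G₀) Y]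
    (hinv : Nonempty ((TensorProduct (MonoidAlgebra (𝓞 K) ↥G₀) X Y)
      ≃ₗ[MonoidAlgebra (𝓞 K) ↥G₀] MonoidAlgebra (𝓞 K) ↥G₀))
    -- the class of X has odd order
    (n : ℕ) (hn : Odd n)
    (hodd_order : Nonempty ((PiTensorProduct (MonoidAlgebra (𝓞 K) ↥G₀)
        (fun _ : Fin n => X)) ≃ₗ[MonoidAlgebra (𝓞 K) ↥G₀] MonoidAlgebra (𝓞 K) ↥G₀))
    -- the class of X lies in the minus part: j_*[X] = -[X]
    (hminus : Nonempty ((TensorProduct (MonoidAlgebra (𝓞 K) ↥G₀)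
        (Twist (MonoidAlgebra.mapDomainRingHom (𝓞 K) (invMonoidHom : ↥G₀ →* ↥G₀)) X) X)
      ≃ₗ[MonoidAlgebra (𝓞 K) ↥G₀] MonoidAlgebra (𝓞 K) ↥G₀))
    -- induction to G kills the class of X
    (hind : letI : Algebra (MonoidAlgebra (𝓞 K) ↥G₀) (MonoidAlgebra (𝓞 K) G) :=
        (MonoidAlgebra.mapDomainRingHom (𝓞 K) G₀.subtype).toAlgebra
      Nonempty ((TensorProduct (MonoidAlgebra (𝓞 K) ↥G₀) (MonoidAlgebra (𝓞 K) G) X)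
        ≃ₗ[MonoidAlgebra (𝓞 K) G] MonoidAlgebra (𝓞 K) G)) :
    -- then X is already free
    Nonempty (X ≃ₗ[MonoidAlgebra (𝓞 K) ↥G₀] MonoidAlgebra (𝓞 K) ↥G₀) := by
  letI algRS : Algebra (MonoidAlgebra (𝓞 K) ↥G₀) (MonoidAlgebra (𝓞 K) G) :=
        (MonoidAlgebra.mapDomainRingHom (𝓞 K) G₀.subtype).toAlgebra
  have halg : ∀ r, algebraMap (MonoidAlgebra (𝓞 K) ↥G₀) (MonoidAlgebra (𝓞 K) G) r =
    MonoidAlgebra.mapDomainRingHom (𝓞 K) G₀.subtype r := fun _ => rfl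
  haveI : FaithfulSMul (MonoidAlgebra (𝓞 K) ↥G₀) (MonoidAlgebra (𝓞 K) G) := by
    rw [faithfulSMul_iff_algebraMap_injective]
    exact MonoidAlgebra.mapDomain_injective G₀.subtype_injective
  haveI : Module.Invertible (MonoidAlgebra (𝓞 K) ↥G₀) X := Module.Invertible.left hinv.some
  have hcomp : ∀ {A B C : Type _} [CommGroup A] [CommGroup B] [CommGroup C] (f : B →* C)
      (g : A →* B) (s : MonoidAlgebra (𝓞 K) A), MonoidAlgebra.mapDomainRingHom (𝓞 K) f
        (MonoidAlgebra.mapDomainRingHom (𝓞 K) g s) =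
        MonoidAlgebra.mapDomainRingHom (𝓞 K) (f.comp g) s := by
    intro A B C _ _ _ f g s
    rw [MonoidAlgebra.mapDomainRingHom_comp]; rfl
  have hid : ∀ {A : Type _} [CommGroup A] (f : A →* A) (hf : f = MonoidHom.id A)
      (s : MonoidAlgebra (𝓞 K) A), MonoidAlgebra.mapDomainRingHom (𝓞 K) f s = s := by
    intro A _ f hf s
    rw [hf, MonoidAlgebra.mapDomainRingHom_id]; rfl
  have hsq : CommRing.Pic.mk (MonoidAlgebra (𝓞 K) ↥G₀) X ^ 2 = 1 := by
    refine core_sq (S := MonoidAlgebra (𝓞 K) G) (T := MonoidAlgebra (𝓞 K) (G × (G ⧸ G₀)))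
      (MonoidAlgebra.mapDomainRingHom (𝓞 K) (MonoidHom.inl G (G ⧸ G₀)))
      (MonoidAlgebra.mapDomainRingHom (𝓞 K) ((MonoidHom.id G).prod (QuotientGroup.mk' G₀)))
      (MonoidAlgebra.mapDomainRingHom (𝓞 K) (MonoidHom.fst G (G ⧸ G₀)))
      ?_ ?_ ?_ ?_ (MonoidAlgebra.mapDomainRingHom (𝓞 K) (invMonoidHom : ↥G₀ →* ↥G₀))
      (MonoidAlgebra.mapDomainRingHom (𝓞 K) (invMonoidHom : G →* G))
      (MonoidAlgebra.mapDomainRingHom (𝓞 K) (invMonoidHom : G × (G ⧸ G₀) →* G × (G ⧸ G₀)))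
      ?_ ?_ ?_ ?_ ?_ ?_ ?_ X hminus hind
    · intro s
      rw [hcomp, hid]; ext; rfl
    · intro s
      rw [hcomp, hid]; ext; rfl
    · intro r
      rw [halg, hcomp, hcomp]
      congr 2
      ext x
      · rfl
      · simp
    · intro s hs
      have hsupp : ∀ g : G, g ∉ G₀ → s.coeff g = 0 := by
        intro g hg
        have h1 := congrArg (fun y => y.coeff (g, (g : G ⧸ G₀))) hs
        have h2 : (MonoidAlgebra.mapDomainRingHom (𝓞 K)
            ((MonoidHom.id G).prod (QuotientGroup.mk' G₀)) s).coeff (g, (g : G ⧸ G₀)) =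
            s.coeff g :=
          Finsupp.mapDomain_apply (f := fun g : G => (g, (g : G ⧸ G₀)))
            (fun a b h => congrArg Prod.fst h) s.coeff g
        have h3 : (MonoidAlgebra.mapDomainRingHom (𝓞 K)
            (MonoidHom.inl G (G ⧸ G₀)) s).coeff (g, (g : G ⧸ G₀)) = 0 := by
          refine Finsupp.mapDomain_notin_range (f := fun g : G => (g, (1 : G ⧸ G₀))) s.coeff _ ?_
          rintro ⟨y, hy⟩
          apply hg
          rw [← QuotientGroup.eq_one_iff]
          exact (congrArg Prod.snd hy).symm
        rw [← h2, ← h3]; exact h1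
      refine ⟨MonoidAlgebra.ofCoeff (s.coeff.comapDomain (G₀.subtype)
        G₀.subtype_injective.injOn), ?_⟩
      rw [halg]
      apply MonoidAlgebra.coeff_injective
      refine Finsupp.mapDomain_comapDomain G₀.subtype G₀.subtype_injective s.coeff ?_
      intro g hg
      have : g ∈ G₀ := by
        by_contra hg'
        exact (Finsupp.mem_support_iff.mp hg) (hsupp g hg')
      exact ⟨⟨g, this⟩, rfl⟩
    · intro r
      rw [halg, halg, hcomp, hcomp]; rfl
    · intro s
      rw [hcomp, hid]; ext x; simp
    · intro s
      rw [hcomp, hid]; ext x <;> simp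
    · intro s
      rw [hcomp, hcomp]; congr 2; ext x <;> simp
    · intro s
      rw [hcomp, hcomp]; congr 2
    · intro s
      rw [hcomp, hcomp]; rfl
    · intro w hw hp
      haveI : Fintype (G ⧸ G₀) := Fintype.ofFinite _
      obtain ⟨⟨g, q⟩, c, rfl⟩ := lenstra hK w hw
      have hp' : MonoidAlgebra.single g c = MonoidAlgebra.single (1 : G) (1 : 𝓞 K) := by
        rw [← MonoidAlgebra.one_def, ← hp]; simp
      rw [MonoidAlgebra.single_inj] at hp'
      obtain ⟨rfl, rfl⟩ : g = 1 ∧ c = 1 := by simpa using hp'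
      obtain ⟨a, rfl⟩ := QuotientGroup.mk_surjective q
      refine ⟨⟨MonoidAlgebra.single a 1, MonoidAlgebra.single a⁻¹ 1, ?_, ?_⟩, ?_⟩
      · simp [MonoidAlgebra.single_mul_single, MonoidAlgebra.one_def]
      · simp [MonoidAlgebra.single_mul_single, MonoidAlgebra.one_def]
      · simp [MonoidAlgebra.single_mul_single]
  have hpow : CommRing.Pic.mk (MonoidAlgebra (𝓞 K) ↥G₀) X ^ n = 1 := by
    obtain ⟨e⟩ := tensorPower_pic (R := MonoidAlgebra (𝓞 K) ↥G₀) X n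
    rw [← CommRing.Pic.mk_self, eq_comm, CommRing.Pic.mk_eq_iff]
    exact ⟨hodd_order.some.symm ≪≫ₗ e⟩
  rw [← CommRing.Pic.mk_eq_one_iff]
  obtain ⟨m, rfl⟩ := hn
  rwa [pow_succ, pow_mul, hsq, one_pow, one_mul] at hpow
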